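/- arXiv:2202.00127 — 3 statements merged into one kernel-verified Lean document; each statement's English description precedes it below -/
import Mathlib

section
/- Let f_L, f_S : ℝ → ℝ be continuous with f_S(t) > 0 and f_S(t) < f_L(t) for all t (exchange L is more liquid than exchange S), and let P₀ < P*. Define E_L = ∫_{P₀}^{P*} P·f_L(P) dP + P*·∫_{P₀}^{P*} f_S(P) dP and E_S = P*·∫_{P₀}^{P*} f_L(P) dP + ∫_{P₀}^{P*} P·f_S(P) dP. Then E_L < E_S. -/
/-- If exchange L is more liquid than exchange S,
i.e. `0 < f_S(t) < f_L(t)` for all `t`, then the expenditure when the trade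
is revealed early on L, `E_L = ∫_{P₀}^{P*} P·f_L + P*·∫_{P₀}^{P*} f_S`,
is strictly smaller than the expenditure when it is revealed early on S,
`E_S = P*·∫_{P₀}^{P*} f_L + ∫_{P₀}^{P*} P·f_S`. -/
theorem E_L_lt_E_S
    (fL fS : ℝ → ℝ) (hfL : Continuous fL) (hfS : Continuous fS)
    (hfSpos : ∀ t, 0 < fS t) (hSL : ∀ t, fS t < fL t)
    (P₀ Pstar : ℝ) (hP : P₀ < Pstar) :
    (∫ P in P₀..Pstar, P * fL P) + Pstar * (∫ P in P₀..Pstar, fS P)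
      < Pstar * (∫ P in P₀..Pstar, fL P) + (∫ P in P₀..Pstar, P * fS P) := by
  -- `E_S - E_L` is the integral of `(P* - P) (f_L - f_S)`, which is positive on `(P₀, P*)`.
  have hpos : 0 < ∫ P in P₀..Pstar,
      ((Pstar * fL P + P * fS P) - (P * fL P + Pstar * fS P)) := by
    refine intervalIntegral.intervalIntegral_pos_of_pos_on
      (Continuous.intervalIntegrable (by fun_prop) _ _) (fun x hx => ?_) hP
    nlinarith [mul_pos (sub_pos.2 hx.2) (sub_pos.2 (hSL x))]
  have i1 : IntervalIntegrable (fun P => Pstar * fL P) MeasureTheory.volume P₀ Pstar :=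
    Continuous.intervalIntegrable (by fun_prop) _ _
  have i2 : IntervalIntegrable (fun P => P * fS P) MeasureTheory.volume P₀ Pstar :=
    Continuous.intervalIntegrable (by fun_prop) _ _
  have i3 : IntervalIntegrable (fun P => P * fL P) MeasureTheory.volume P₀ Pstar :=
    Continuous.intervalIntegrable (by fun_prop) _ _
  have i4 : IntervalIntegrable (fun P => Pstar * fS P) MeasureTheory.volume P₀ Pstar :=
    Continuous.intervalIntegrable (by fun_prop) _ _
  rw [intervalIntegral.integral_sub (i1.add i2) (i3.add i4),
    intervalIntegral.integral_add i1 i2, intervalIntegral.integral_add i3 i4,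
    intervalIntegral.integral_const_mul, intervalIntegral.integral_const_mul] at hpos
  linarith
end

section
/- Let π_L′, π_S′, E_sim, E_L, E_S be real numbers with E_sim < E_L < E_S, π_L′ ≥ 0, π_S′ ≤ 0, not both π_L′ and π_S′ equal to zero, and suppose the first-order condition π_L′·(E_L − E_sim) + π_S′·(E_S − E_sim) = 0 holds. Then π_sim′ := −(π_L′ + π_S′) < 0 and π_L′ > −π_S′, i.e. |π_L′| > |π_S′|. (At an interior optimal delay, the trader does not maximize the probability of simultaneous execution but leans toward early revelation on the large exchange.) -/
/-- At an interior optimal delay, with `E_sim < E_L < E_S`,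
`π_L′ ≥ 0`, `π_S′ ≤ 0`, not both derivatives zero, and the first-order condition
`π_L′·(E_L − E_sim) + π_S′·(E_S − E_sim) = 0`, we get
`π_sim′ = −(π_L′ + π_S′) < 0` and `π_L′ > −π_S′` (i.e. `|π_L′| > |π_S′|`). -/
theorem delay_leans_toward_large_exchange
    (πL' πS' Esim EL ES : ℝ)
    (h1 : Esim < EL) (h2 : EL < ES)
    (hL : 0 ≤ πL') (hS : πS' ≤ 0)
    (hne : ¬(πL' = 0 ∧ πS' = 0))
    (hFOC : πL' * (EL - Esim) + πS' * (ES - Esim) = 0) :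
    -(πL' + πS') < 0 ∧ πL' > -πS' := by
  have hS_neg : πS' < 0 := by
    refine lt_of_le_of_ne hS fun h0 => hne ⟨?_, h0⟩
    rw [h0, zero_mul, add_zero] at hFOC
    exact (mul_eq_zero.mp hFOC).resolve_right (sub_pos.mpr h1).ne'
  -- The first-order condition rearranges to
  -- `(πL' + πS') * (EL - Esim) = -πS' * (ES - EL)`, whose right side is positive.
  have hprod : 0 < (πL' + πS') * (EL - Esim) := by
    have := mul_pos (neg_pos.mpr hS_neg) (sub_pos.mpr h2)
    linarith
  have hsum : 0 < πL' + πS' := pos_of_mul_pos_left hprod (sub_pos.mpr h1).le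
  constructor <;> linarith
end

section
/- Let H > 0, s > 0, and let A, B > 0 be real numbers (A = E_L − E_sim and B = E_S − E_sim), and let φ(z) = exp(−z²/2)/√(2π) be the standard normal density. Then a real number γ satisfies the first-order condition φ((H − γ)/√s)·A = φ((−γ − H)/√s)·B if and only if γ = (s/(2H))·ln(B/A). In particular, with s = σ_S² + σ_L², the optimal order delay is δ* = μ_L − μ_S + ((σ_S² + σ_L²)/(2H))·ln((E_S − E_sim)/(E_L − E_sim)), so that γ* = μ_S − μ_L + δ* = ((σ_S² + σ_L²)/(2H))·ln((E_S − E_sim)/(E_L − E_sim)). -/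
/-!
After cancelling `√(2π)` and taking logarithms, the first-order condition equates
`-(H - γ)² / (2s) + log A` with `-(γ + H)² / (2s) + log B`. The terms quadratic in `γ` cancel,
which leaves the linear equation `2Hγ / s = log B - log A`.
-/

/-- The density of the standard normal distribution, `φ(z) = exp(−z²/2)/√(2π)`. -/
noncomputable def stdNormalPDF (z : ℝ) : ℝ :=
  Real.exp (-z ^ 2 / 2) / Real.sqrt (2 * Real.pi)

/-- For `H > 0`, `s > 0` and `A, B > 0` (with `A = E_L − E_sim`,
`B = E_S − E_sim`), a real `γ` satisfies the first-order condition
`φ((H − γ)/√s)·A = φ((−γ − H)/√s)·B` iff `γ = (s/(2H))·ln(B/A)`.  In particular,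
with `s = σ_S² + σ_L²`, the optimal delay is
`δ* = μ_L − μ_S + ((σ_S² + σ_L²)/(2H))·ln((E_S − E_sim)/(E_L − E_sim))`, so that
`γ* = μ_S − μ_L + δ*` equals `((σ_S² + σ_L²)/(2H))·ln((E_S − E_sim)/(E_L − E_sim))`. -/
theorem optimal_order_delay
    (H s A B : ℝ) (hH : 0 < H) (hs : 0 < s) (hA : 0 < A) (hB : 0 < B) :
    (∀ γ : ℝ,
        stdNormalPDF ((H - γ) / Real.sqrt s) * A
            = stdNormalPDF ((-γ - H) / Real.sqrt s) * B
          ↔ γ = s / (2 * H) * Real.log (B / A)) ∧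
      (∀ μS μL σS σL Esim EL ES δstar : ℝ,
        s = σS ^ 2 + σL ^ 2 → A = EL - Esim → B = ES - Esim →
        δstar = μL - μS + (σS ^ 2 + σL ^ 2) / (2 * H)
            * Real.log ((ES - Esim) / (EL - Esim)) →
        μS - μL + δstar
          = (σS ^ 2 + σL ^ 2) / (2 * H) * Real.log ((ES - Esim) / (EL - Esim))) := by
  refine ⟨fun γ => ?_, fun μS μL σS σL Esim EL ES δstar _ _ _ hδ => by rw [hδ]; ring⟩
  have hc : 0 < Real.sqrt (2 * Real.pi) := by positivity
  have key : stdNormalPDF ((H - γ) / Real.sqrt s) * A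
        = stdNormalPDF ((-γ - H) / Real.sqrt s) * B
      ↔ -((H - γ) ^ 2 / s) / 2 + Real.log A = -((-γ - H) ^ 2 / s) / 2 + Real.log B := by
    unfold stdNormalPDF
    rw [div_mul_eq_mul_div, div_mul_eq_mul_div, div_left_inj' hc.ne', div_pow, div_pow,
      Real.sq_sqrt hs.le]
    -- Absorb the weights into the exponents, `A = exp (log A)` and `B = exp (log B)`.
    nth_rewrite 1 [← Real.exp_log hA, ← Real.exp_log hB]
    rw [← Real.exp_add, ← Real.exp_add, Real.exp_eq_exp]
  rw [key, Real.log_div hB.ne' hA.ne']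
  have hk : s / (2 * H) ≠ 0 := by positivity
  -- The exponents differ by `2 * H * γ / s`, so the condition is linear in `γ`.
  have hdiff : -((H - γ) ^ 2 / s) / 2 - -((-γ - H) ^ 2 / s) / 2 = γ / (s / (2 * H)) := by
    field_simp
    ring
  rw [mul_comm, ← div_eq_iff hk, ← hdiff]
  constructor <;> intro h <;> linarith
end
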